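/- Let P ⊆ ℝⁿ be a convex body containing 0 in its interior, and for every convex φ : ℝⁿ → ℝ with φ − φ_P bounded define 𝒢(φ) := −(1/vol(P)) ∫_P φ*(p) dp + log ∫_{ℝⁿ} e^{−φ(x)} dx. Then 𝒢 is bounded from above on the set of all such φ if and only if 0 is the barycenter of P, i.e. ∫_P p dp = 0 as a vector in ℝⁿ. -/

import Mathlib

open scoped InnerProductSpace
open MeasureTheory

/-- The support function `φ_P(x) = sup_{p ∈ P} ⟨x, p⟫` of a set `P`. -/
noncomputable def suppFn {n : ℕ} (P : Set (EuclideanSpace ℝ (Fin n)))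
    (x : EuclideanSpace ℝ (Fin n)) : ℝ :=
  ⨆ p : P, ⟪x, (p : EuclideanSpace ℝ (Fin n))⟫_ℝ

/-- The (real-valued) Legendre transform `φ*(p) = sup_x (⟨p, x⟩ - φ(x))`. -/
noncomputable def legendre {n : ℕ} (φ : EuclideanSpace ℝ (Fin n) → ℝ)
    (p : EuclideanSpace ℝ (Fin n)) : ℝ :=
  ⨆ x, (⟪p, x⟫_ℝ - φ x)

/-- The Legendre transform with values in `ℝ ∪ {+∞}` (as a sup of real numbers
over a nonempty index it never takes the value `-∞`). -/
noncomputable def legendreE {n : ℕ} (φ : EuclideanSpace ℝ (Fin n) → ℝ)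
    (p : EuclideanSpace ℝ (Fin n)) : EReal :=
  ⨆ x, ((⟪p, x⟫_ℝ - φ x : ℝ) : EReal)

/-- The Moser–Trudinger type functional
`𝒢(φ) := -(1/vol P) ∫_P φ* dp + log ∫ e^{-φ} dx`. -/
noncomputable def GFun {n : ℕ} (P : Set (EuclideanSpace ℝ (Fin n)))
    (φ : EuclideanSpace ℝ (Fin n) → ℝ) : ℝ :=
  -((volume P).toReal)⁻¹ * (∫ p in P, legendre φ p) +
    Real.log (∫ x, Real.exp (-φ x))

/-!
Translating `φ` by `a` adds `⟪p, a⟫` to `φ*(p)` and does not change `∫ e^{-φ}`. So, with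
`b = ∫_P p dp`, it lowers `𝒢` by `⟪b, a⟫ / vol P`, which is unbounded in `a` unless `b = 0`.

Conversely, the definition of `φ*` gives `max ⟪p, x⟫ ⟪p, y⟫ ≤ φ*(p) + max (φ x) (φ y)` on `P`. If
the barycenter is `0`, the mean over `P` of the left-hand side is half the mean of `|⟪p, x - y⟫|`,
which is a norm of `x - y`. Hence `k ‖x - y‖ ≤ I + max (φ x) (φ y)`, where `I` is the mean of `φ*`
and `k > 0` depends only on `P`. Taking `x = y` shows that `φ` is bounded below, and taking for `y`
a point `a` with `φ a ≤ inf φ + 1` gives `φ x ≥ k ‖x - a‖ - I - 1`. Therefore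
`log ∫ e^{-φ} ≤ I + 1 + log ∫ e^{-k ‖x‖}`, and `I` cancels in `𝒢(φ)`.
-/

section FiniteDimensional

variable {E : Type*} [NormedAddCommGroup E] [NormedSpace ℝ E] [FiniteDimensional ℝ E]

lemma exists_pos_forall_mul_norm_le {g : E → ℝ} (hg : Continuous g)
    (hsmul : ∀ t : ℝ, 0 ≤ t → ∀ x, g (t • x) = t * g x) (hpos : ∀ x, x ≠ 0 → 0 < g x) :
    ∃ c : ℝ, 0 < c ∧ ∀ x, c * ‖x‖ ≤ g x := by
  have : ProperSpace E := FiniteDimensional.proper ℝ E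
  obtain ⟨c, hc, hle⟩ := (isCompact_sphere (0 : E) 1).exists_forall_le' hg.continuousOn
    fun u hu => hpos u (ne_zero_of_mem_unit_sphere ⟨u, hu⟩)
  refine ⟨c, hc, fun x => ?_⟩
  rcases eq_or_ne x 0 with rfl | hx
  · simpa using (hsmul 0 le_rfl 0).ge
  · have hunit : ‖x‖⁻¹ • x ∈ Metric.sphere (0 : E) 1 := by
      simp [norm_smul, hx]
    calc c * ‖x‖ ≤ g (‖x‖⁻¹ • x) * ‖x‖ := by gcongr; exact hle _ hunit
      _ = g x := by
        rw [hsmul _ (by positivity)]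
        field_simp [norm_ne_zero_iff.2 hx]

variable [MeasurableSpace E] [BorelSpace E] (μ : Measure E) [μ.IsAddHaarMeasure]

lemma integrable_exp_neg_mul_norm {k : ℝ} (hk : 0 < k) :
    Integrable (fun x : E => Real.exp (-(k * ‖x‖))) μ := by
  rcases subsingleton_or_nontrivial E with _ | _
  · exact Continuous.integrable_of_hasCompactSupport (by fun_prop) (.of_compactSpace _)
  · rw [integrable_fun_norm_addHaar μ (f := fun r => Real.exp (-(k * r)))]
    have hexponent : (-1 : ℝ) < (Module.finrank ℝ E - 1 : ℕ) := by
      linarith [Nat.cast_nonneg (α := ℝ) (Module.finrank ℝ E - 1)]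
    simpa using integrableOn_rpow_mul_exp_neg_mul_rpow hexponent one_pos hk

lemma log_integral_exp_neg_le {φ : E → ℝ} (hφ : Measurable φ) {k : ℝ} (hk : 0 < k) (a : E)
    {B : ℝ} (hB : ∀ x, k * ‖x - a‖ ≤ φ x + B) :
    Real.log (∫ x, Real.exp (-φ x) ∂μ) ≤ B + Real.log (∫ x, Real.exp (-(k * ‖x‖)) ∂μ) := by
  have hdom : Integrable (fun x => Real.exp B * Real.exp (-(k * ‖x - a‖))) μ :=
    ((integrable_exp_neg_mul_norm μ hk).comp_sub_right a).const_mul _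
  have hle (x : E) : Real.exp (-φ x) ≤ Real.exp B * Real.exp (-(k * ‖x - a‖)) := by
    rw [← Real.exp_add, Real.exp_le_exp]
    linarith [hB x]
  have hint : Integrable (fun x => Real.exp (-φ x)) μ :=
    hdom.mono' (by fun_prop) (.of_forall fun x => by simpa using hle x)
  have hpos : 0 < ∫ x, Real.exp (-(k * ‖x‖)) ∂μ :=
    integral_exp_pos (integrable_exp_neg_mul_norm μ hk)
  calc Real.log (∫ x, Real.exp (-φ x) ∂μ)
      ≤ Real.log (∫ x, Real.exp B * Real.exp (-(k * ‖x - a‖)) ∂μ) :=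
        Real.log_le_log (integral_exp_pos hint) (integral_mono hint hdom hle)
    _ = Real.log (Real.exp B * ∫ x, Real.exp (-(k * ‖x‖)) ∂μ) := by
        rw [integral_const_mul, integral_sub_right_eq_self (fun x => Real.exp (-(k * ‖x‖))) a]
    _ = B + Real.log (∫ x, Real.exp (-(k * ‖x‖)) ∂μ) := by
        rw [Real.log_mul (Real.exp_pos B).ne' hpos.ne', Real.log_exp]

end FiniteDimensional

section InnerProduct

variable {E : Type*} [NormedAddCommGroup E] [InnerProductSpace ℝ E]

lemma eq_zero_of_forall_inner_le {b : E} {C : ℝ} (h : ∀ a, ⟪b, a⟫_ℝ ≤ C) : b = 0 := by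
  by_contra hb
  have hbb : ⟪b, b⟫_ℝ ≠ 0 := inner_self_ne_zero.2 hb
  have hlarge := h (((C + 1) / ⟪b, b⟫_ℝ) • b)
  rw [real_inner_smul_right, div_mul_cancel₀ _ hbb] at hlarge
  linarith

variable [FiniteDimensional ℝ E] [MeasurableSpace E] [BorelSpace E]
  (μ : Measure E) [μ.IsAddHaarMeasure]

lemma measure_setOf_inner_eq_zero {y : E} (hy : y ≠ 0) : μ {p | ⟪p, y⟫_ℝ = 0} = 0 := by
  have hker : {p : E | ⟪p, y⟫_ℝ = 0} = (ℝ ∙ y)ᗮ := by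
    ext p
    simp [Submodule.mem_orthogonal_singleton_iff_inner_left]
  rw [hker]
  refine Measure.addHaar_submodule μ _ fun htop => hy ?_
  simpa [Submodule.orthogonal_eq_top_iff] using htop

lemma exists_pos_forall_mul_norm_le_setIntegral_abs_inner {K : Set E} (hK : IsCompact K)
    (hμK : μ K ≠ 0) :
    ∃ c : ℝ, 0 < c ∧ ∀ y : E, c * ‖y‖ ≤ ∫ p in K, |⟪p, y⟫_ℝ| ∂μ := by
  refine exists_pos_forall_mul_norm_le
    (continuous_parametric_integral_of_continuous (by fun_prop) hK) (fun t ht y => ?_)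
    fun y hy => ?_
  · simp only [real_inner_smul_right, abs_mul, abs_of_nonneg ht, integral_const_mul]
  · rw [setIntegral_pos_iff_support_of_nonneg_ae (.of_forall fun _ => abs_nonneg _)
      (ContinuousOn.integrableOn_compact hK (by fun_prop))]
    have hsupp : (Function.support fun p => |⟪p, y⟫_ℝ|) ∩ K = K \ {p | ⟪p, y⟫_ℝ = 0} := by
      ext p
      simp [and_comm]
    rw [hsupp, measure_sdiff_null (measure_setOf_inner_eq_zero μ hy)]
    exact hμK.bot_lt

end InnerProduct

section SupportFunction

variable {n : ℕ} {P : Set (EuclideanSpace ℝ (Fin n))}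

lemma inner_le_suppFn (hP : IsCompact P) (x : EuclideanSpace ℝ (Fin n))
    {p : EuclideanSpace ℝ (Fin n)} (hp : p ∈ P) : ⟪x, p⟫_ℝ ≤ suppFn P x := by
  have hbdd := hP.bddAbove_image (f := fun p => ⟪x, p⟫_ℝ) (by fun_prop)
  rw [Set.image_eq_range] at hbdd
  exact le_ciSup hbdd ⟨p, hp⟩

lemma suppFn_le (hne : P.Nonempty) {x : EuclideanSpace ℝ (Fin n)} {c : ℝ}
    (h : ∀ p ∈ P, ⟪x, p⟫_ℝ ≤ c) : suppFn P x ≤ c :=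
  have : Nonempty P := hne.to_subtype
  ciSup_le fun p => h p p.2

lemma suppFn_add_le (hP : IsCompact P) (hne : P.Nonempty) (x y : EuclideanSpace ℝ (Fin n)) :
    suppFn P (x + y) ≤ suppFn P x + suppFn P y :=
  suppFn_le hne fun p hp => by
    rw [inner_add_left]
    exact add_le_add (inner_le_suppFn hP x hp) (inner_le_suppFn hP y hp)

lemma convexOn_suppFn (hP : IsCompact P) (hne : P.Nonempty) :
    ConvexOn ℝ Set.univ (suppFn P) := by
  refine ⟨convex_univ, fun x _ y _ s t hs ht _ => suppFn_le hne fun p hp => ?_⟩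
  rw [inner_add_left, real_inner_smul_left, real_inner_smul_left, smul_eq_mul, smul_eq_mul]
  gcongr
  exacts [inner_le_suppFn hP x hp, inner_le_suppFn hP y hp]

end SupportFunction

lemma legendre_comp_sub_right {n : ℕ} {φ : EuclideanSpace ℝ (Fin n) → ℝ}
    {p : EuclideanSpace ℝ (Fin n)} (hbdd : BddAbove (Set.range fun x => ⟪p, x⟫_ℝ - φ x))
    (a : EuclideanSpace ℝ (Fin n)) :
    legendre (fun x => φ (x - a)) p = legendre φ p + ⟪p, a⟫_ℝ :=
  calc ⨆ x, (⟪p, x⟫_ℝ - φ (x - a)) = ⨆ x, (⟪p, x + a⟫_ℝ - φ (x + a - a)) :=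
        ((Equiv.addRight a).iSup_comp (g := fun x => ⟪p, x⟫_ℝ - φ (x - a))).symm
    _ = ⨆ x, (⟪p, x⟫_ℝ - φ x + ⟪p, a⟫_ℝ) := by
        simp only [inner_add_right, add_sub_cancel_right, add_sub_right_comm]
    _ = (⨆ x, (⟪p, x⟫_ℝ - φ x)) + ⟪p, a⟫_ℝ := (ciSup_add hbdd _).symm

/-- The function `φ` grows like the support function of `P`, i.e. `φ - φ_P` is bounded. Together
with convexity, which is kept separate, this describes the functions on which `𝒢` is considered. -/
def HasSuppFnGrowth {n : ℕ} (P : Set (EuclideanSpace ℝ (Fin n)))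
    (φ : EuclideanSpace ℝ (Fin n) → ℝ) : Prop :=
  ∃ M : ℝ, ∀ x, |φ x - suppFn P x| ≤ M

namespace HasSuppFnGrowth

variable {n : ℕ} {P : Set (EuclideanSpace ℝ (Fin n))} {φ : EuclideanSpace ℝ (Fin n) → ℝ}

lemma comp_sub_right (hφ : HasSuppFnGrowth P φ) (hP : IsCompact P) (hne : P.Nonempty)
    (a : EuclideanSpace ℝ (Fin n)) : HasSuppFnGrowth P fun x => φ (x - a) := by
  obtain ⟨M, hM⟩ := hφ
  refine ⟨M + max (suppFn P a) (suppFn P (-a)), fun x => ?_⟩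
  have hMx := abs_le.1 (hM (x - a))
  have hsub : suppFn P (x - a) ≤ suppFn P x + suppFn P (-a) := by
    simpa [sub_eq_add_neg] using suppFn_add_le hP hne x (-a)
  have hadd : suppFn P x ≤ suppFn P (x - a) + suppFn P a := by
    simpa using suppFn_add_le hP hne (x - a) a
  have hmax_left := le_max_left (suppFn P a) (suppFn P (-a))
  have hmax_right := le_max_right (suppFn P a) (suppFn P (-a))
  rw [abs_le]
  constructor <;> linarith

lemma exists_forall_inner_sub_le (hφ : HasSuppFnGrowth P φ) (hP : IsCompact P) :
    ∃ M : ℝ, ∀ p ∈ P, ∀ x, ⟪p, x⟫_ℝ - φ x ≤ M := by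
  obtain ⟨M, hM⟩ := hφ
  refine ⟨M, fun p hp x => ?_⟩
  have hsupp := inner_le_suppFn hP x hp
  rw [real_inner_comm] at hsupp
  linarith [(abs_le.1 (hM x)).1]

lemma bddAbove_range (hφ : HasSuppFnGrowth P φ) (hP : IsCompact P)
    {p : EuclideanSpace ℝ (Fin n)} (hp : p ∈ P) :
    BddAbove (Set.range fun x => ⟪p, x⟫_ℝ - φ x) := by
  obtain ⟨M, hM⟩ := hφ.exists_forall_inner_sub_le hP
  exact ⟨M, Set.forall_mem_range.2 (hM p hp)⟩

lemma inner_sub_le_legendre (hφ : HasSuppFnGrowth P φ) (hP : IsCompact P)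
    {p : EuclideanSpace ℝ (Fin n)} (hp : p ∈ P) (x : EuclideanSpace ℝ (Fin n)) :
    ⟪p, x⟫_ℝ - φ x ≤ legendre φ p :=
  le_ciSup (hφ.bddAbove_range hP hp) x

lemma integrableOn_legendre (hφ : HasSuppFnGrowth P φ) (hP : IsCompact P) :
    IntegrableOn (legendre φ) P := by
  obtain ⟨M, hM⟩ := hφ.exists_forall_inner_sub_le hP
  have hlsc : LowerSemicontinuous fun p : P => legendre φ p :=
    lowerSemicontinuous_ciSup (fun p => hφ.bddAbove_range hP p.2) fun x =>
      Continuous.lowerSemicontinuous (by fun_prop)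
  have hmeas : AEMeasurable (legendre φ) (volume.restrict P) :=
    aemeasurable_restrict_of_measurable_subtype hP.measurableSet hlsc.measurable
  refine .of_bound hP.measure_lt_top hmeas.aestronglyMeasurable (max M (φ 0)) ?_
  refine ae_restrict_of_forall_mem hP.measurableSet fun p hp => ?_
  have hlower : -φ 0 ≤ legendre φ p := by simpa using hφ.inner_sub_le_legendre hP hp 0
  have hupper : legendre φ p ≤ M := ciSup_le (hM p hp)
  exact abs_le'.2 ⟨hupper.trans (le_max_left _ _), (neg_le.1 hlower).trans (le_max_right _ _)⟩

lemma gFun_comp_sub_right (hφ : HasSuppFnGrowth P φ) (hP : IsCompact P)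
    (a : EuclideanSpace ℝ (Fin n)) :
    GFun P (fun x => φ (x - a)) =
      GFun P φ - (volume P).toReal⁻¹ * ⟪∫ p in P, p, a⟫_ℝ := by
  have hid : IntegrableOn (fun p : EuclideanSpace ℝ (Fin n) => p) P :=
    continuousOn_id.integrableOn_compact hP
  have hlegendre : ∫ p in P, legendre (fun x => φ (x - a)) p =
      (∫ p in P, legendre φ p) + ⟪∫ p in P, p, a⟫_ℝ := by
    rw [setIntegral_congr_fun hP.measurableSet fun p hp =>
        legendre_comp_sub_right (hφ.bddAbove_range hP hp) a,
      integral_add (hφ.integrableOn_legendre hP) (hid.inner_const a), real_inner_comm,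
      ← integral_inner hid]
    simp only [real_inner_comm]
  rw [GFun, GFun, hlegendre, integral_sub_right_eq_self (fun x => Real.exp (-φ x)) a]
  ring

lemma half_setIntegral_abs_inner_sub_le (hφ : HasSuppFnGrowth P φ) (hP : IsCompact P)
    (hbar : ∫ p in P, p = (0 : EuclideanSpace ℝ (Fin n))) (x y : EuclideanSpace ℝ (Fin n)) :
    (∫ p in P, |⟪p, x - y⟫_ℝ|) / 2 ≤
      (∫ p in P, legendre φ p) + (volume P).toReal * max (φ x) (φ y) := by
  have hid : IntegrableOn (fun p : EuclideanSpace ℝ (Fin n) => p) P :=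
    continuousOn_id.integrableOn_compact hP
  have hlinear : ∫ p in P, ⟪x + y, p⟫_ℝ = 0 := by
    rw [integral_inner hid, hbar, inner_zero_right]
  have hint_linear : IntegrableOn (fun p => ⟪x + y, p⟫_ℝ) P :=
    ContinuousOn.integrableOn_compact hP (by fun_prop)
  have hint_abs : IntegrableOn (fun p => |⟪p, x - y⟫_ℝ|) P :=
    ContinuousOn.integrableOn_compact hP (by fun_prop)
  have hint_const : IntegrableOn (fun _ => max (φ x) (φ y)) P :=
    integrableOn_const hP.measure_lt_top.ne
  have hpointwise : ∀ p ∈ P,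
      (⟪x + y, p⟫_ℝ + |⟪p, x - y⟫_ℝ|) / 2 ≤ legendre φ p + max (φ x) (φ y) := by
    intro p hp
    have hx := hφ.inner_sub_le_legendre hP hp x
    have hy := hφ.inner_sub_le_legendre hP hp y
    have hmax_left := le_max_left (φ x) (φ y)
    have hmax_right := le_max_right (φ x) (φ y)
    rw [real_inner_comm, inner_add_right, inner_sub_right]
    cases abs_cases (⟪p, x⟫_ℝ - ⟪p, y⟫_ℝ) <;> linarith
  calc (∫ p in P, |⟪p, x - y⟫_ℝ|) / 2
      = ∫ p in P, (⟪x + y, p⟫_ℝ + |⟪p, x - y⟫_ℝ|) / 2 := by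
        rw [integral_div, integral_add hint_linear hint_abs, hlinear, zero_add]
    _ ≤ ∫ p in P, (legendre φ p + max (φ x) (φ y)) :=
        setIntegral_mono_on ((hint_linear.add hint_abs).div_const 2)
          ((hφ.integrableOn_legendre hP).add hint_const) hP.measurableSet hpointwise
    _ = (∫ p in P, legendre φ p) + (volume P).toReal * max (φ x) (φ y) := by
        rw [integral_add (hφ.integrableOn_legendre hP) hint_const, setIntegral_const,
          smul_eq_mul, Measure.real]

end HasSuppFnGrowth

section Main

variable {n : ℕ} {P : Set (EuclideanSpace ℝ (Fin n))}

lemma setIntegral_id_eq_zero_of_forall_gFun_le (hP : IsCompact P) (hV : volume P ≠ 0) {C : ℝ}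
    (hC : ∀ φ : EuclideanSpace ℝ (Fin n) → ℝ,
      ConvexOn ℝ Set.univ φ → HasSuppFnGrowth P φ → GFun P φ ≤ C) :
    ∫ p in P, p = (0 : EuclideanSpace ℝ (Fin n)) := by
  have hne : P.Nonempty := nonempty_of_measure_ne_zero hV
  have hsupp : HasSuppFnGrowth P (suppFn P) := ⟨0, by simp⟩
  have hVpos : 0 < (volume P).toReal := ENNReal.toReal_pos hV hP.measure_lt_top.ne
  refine eq_zero_of_forall_inner_le (C := (volume P).toReal * (C - GFun P (suppFn P)))
    fun a => ?_
  have hconvex : ConvexOn ℝ Set.univ fun x => suppFn P (x - -a) := by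
    simpa [Function.comp_def] using (convexOn_suppFn hP hne).translate_left a
  have htranslate := hC _ hconvex (hsupp.comp_sub_right hP hne (-a))
  rw [hsupp.gFun_comp_sub_right hP, inner_neg_right] at htranslate
  rw [← inv_mul_le_iff₀ hVpos]
  linarith

lemma exists_pos_forall_mul_norm_sub_le (hP : IsCompact P) (hV : volume P ≠ 0)
    (hbar : ∫ p in P, p = (0 : EuclideanSpace ℝ (Fin n))) :
    ∃ k : ℝ, 0 < k ∧ ∀ φ : EuclideanSpace ℝ (Fin n) → ℝ, HasSuppFnGrowth P φ → ∀ x y,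
      k * ‖x - y‖ ≤ (volume P).toReal⁻¹ * (∫ p in P, legendre φ p) + max (φ x) (φ y) := by
  obtain ⟨c, hc, hle⟩ := exists_pos_forall_mul_norm_le_setIntegral_abs_inner volume hP hV
  have hVpos : 0 < (volume P).toReal := ENNReal.toReal_pos hV hP.measure_lt_top.ne
  refine ⟨(volume P).toReal⁻¹ * (c / 2), by positivity, fun φ hφ x y => ?_⟩
  calc (volume P).toReal⁻¹ * (c / 2) * ‖x - y‖
      = (volume P).toReal⁻¹ * (c * ‖x - y‖ / 2) := by ring
    _ ≤ (volume P).toReal⁻¹ *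
          ((∫ p in P, legendre φ p) + (volume P).toReal * max (φ x) (φ y)) := by
        gcongr
        linarith [hle (x - y), hφ.half_setIntegral_abs_inner_sub_le hP hbar x y]
    _ = (volume P).toReal⁻¹ * (∫ p in P, legendre φ p) + max (φ x) (φ y) := by
        rw [mul_add, inv_mul_cancel_left₀ hVpos.ne']

lemma exists_forall_gFun_le (hP : IsCompact P) (hV : volume P ≠ 0)
    (hbar : ∫ p in P, p = (0 : EuclideanSpace ℝ (Fin n))) :
    ∃ C : ℝ, ∀ φ : EuclideanSpace ℝ (Fin n) → ℝ,
      Measurable φ → HasSuppFnGrowth P φ → GFun P φ ≤ C := by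
  obtain ⟨k, hk, hle⟩ := exists_pos_forall_mul_norm_sub_le hP hV hbar
  refine ⟨1 + Real.log (∫ x : EuclideanSpace ℝ (Fin n), Real.exp (-(k * ‖x‖))),
    fun φ hmeas hφ => ?_⟩
  have hbdd : BddBelow (Set.range φ) := by
    refine ⟨-((volume P).toReal⁻¹ * ∫ p in P, legendre φ p), Set.forall_mem_range.2 fun x => ?_⟩
    have hxx := hle φ hφ x x
    rw [sub_self, norm_zero, mul_zero, max_self] at hxx
    linarith
  obtain ⟨a, ha⟩ : ∃ a, φ a < (⨅ x, φ x) + 1 := exists_lt_of_ciInf_lt (lt_add_one _)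
  have hgrowth (x) : k * ‖x - a‖ ≤ φ x + ((volume P).toReal⁻¹ * (∫ p in P, legendre φ p) + 1) := by
    have hmax : max (φ x) (φ a) ≤ φ x + 1 :=
      max_le (lt_add_one _).le (by linarith [ciInf_le hbdd x])
    linarith [hle φ hφ x a]
  have hlog := log_integral_exp_neg_le volume hmeas hk a hgrowth
  rw [GFun]
  linarith

end Main

theorem statement15_general {n : ℕ} (P : Set (EuclideanSpace ℝ (Fin n))) (hP : IsCompact P)
    (h0 : (0 : EuclideanSpace ℝ (Fin n)) ∈ interior P) :
    (∃ C : ℝ, ∀ φ : EuclideanSpace ℝ (Fin n) → ℝ,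
        ConvexOn ℝ Set.univ φ → HasSuppFnGrowth P φ → GFun P φ ≤ C) ↔
      (∫ p in P, p) = (0 : EuclideanSpace ℝ (Fin n)) := by
  have hV : volume P ≠ 0 := (Measure.measure_pos_of_nonempty_interior volume ⟨0, h0⟩).ne'
  constructor
  · rintro ⟨C, hC⟩
    exact setIntegral_id_eq_zero_of_forall_gFun_le hP hV hC
  · intro hbar
    obtain ⟨C, hC⟩ := exists_forall_gFun_le hP hV hbar
    exact ⟨C, fun φ hconv => hC φ (continuousOn_univ.1 (hconv.continuousOn isOpen_univ)).measurable⟩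

/-- The functional `𝒢` is bounded above on the set of convex
functions `φ` with `φ - φ_P` bounded if and only if `0` is the barycenter of
`P`, i.e. `∫_P p dp = 0`. -/
theorem statement15 {n : ℕ} (P : Set (EuclideanSpace ℝ (Fin n)))
    (hPcomp : IsCompact P) (hPconv : Convex ℝ P)
    (h0 : (0 : EuclideanSpace ℝ (Fin n)) ∈ interior P) :
    (∃ C : ℝ, ∀ φ : EuclideanSpace ℝ (Fin n) → ℝ,
        ConvexOn ℝ Set.univ φ → (∃ M : ℝ, ∀ x, |φ x - suppFn P x| ≤ M) →
        GFun P φ ≤ C) ↔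
      (∫ p in P, p) = (0 : EuclideanSpace ℝ (Fin n)) :=
  statement15_general P hPcomp h0
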